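/- n(3) > A(7198, 158386): there exists a word over a three-letter alphabet of length greater than A(7198, 158386) satisfying property (*). -/

import Mathlib

/-- `friedmanBlock s i` is the block `s_i s_{i+1} … s_{2i}` of the word `s`
(1-based indices); it has length `i + 1` when `2*i ≤ s.length`. -/
def friedmanBlock {α : Type} (s : List α) (i : ℕ) : List α :=
  (s.drop (i - 1)).take (i + 1)

/-- Friedman's property (*): there are no indices `1 ≤ i < j ≤ n/2` such that
`s^(i)` is a (scattered) subword of `s^(j)`.  Note `j ≤ n/2 ↔ 2*j ≤ n`. -/
def SatisfiesStar {α : Type} (s : List α) : Prop :=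
  ∀ i j : ℕ, 1 ≤ i → i < j → 2 * j ≤ s.length →
    ¬ (friedmanBlock s i).Sublist (friedmanBlock s j)

/-- `friedmanN k` = n(k), the length of a longest word over a `k`-letter
alphabet satisfying (*). -/
noncomputable def friedmanN (k : ℕ) : ℕ :=
  sSup {n : ℕ | ∃ s : List (Fin k), s.length = n ∧ SatisfiesStar s}

/-- The modified Ackermann function: `A(1,c) = 2c`, `A(f,1) = 2` for `f ≥ 2`,
and `A(f,c) = A(f-1, A(f,c-1))` for `f, c ≥ 2` (values at `f = 0` or `c = 0`
are irrelevant junk values). -/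
def ackF : ℕ → ℕ → ℕ
  | 0, _ => 0
  | 1, c => 2 * c
  | _ + 2, 0 => 2
  | _ + 2, 1 => 2
  | f + 2, c + 2 => ackF (f + 1) (ackF (f + 2) (c + 1))
termination_by f c => (f, c)

/-!
The word has the form `h S^p T`. The head `h` is explicit, of length `p = 106493`; every block
`s^(i)` with `i ≤ p` contains the letter `M`, whereas `T` does not, so these blocks have to be
compared with each other only. There are too many of them to do so one by one, but the pattern of
letters `S` in `s^(i)` changes at few values of `i`: between two of these values the block is
determined by the number of letters `M` before the first `S` and after the last one, and a greedy
matching refutes the embeddings for all such numbers at once.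

The tail `T` consists of rounds, each of which is a code `C j` with `d` letters `S` between long
runs of `F`, separated by runs `S^(2d+2)`. The lengths of the rounds double in such a way that
every block `s^(i)` with `i > 2p` contains a complete code, next to a separator or framed by two of
them. Counting letters `S`, an embedding into a later block would have to map this code into a
single round, and into one which no code of smaller index embeds in; the remaining pairs of blocks
are excluded by their position within the same round. Blocks `s^(i)` with `p < i ≤ 2p` that can
embed in one of those contain the first code and are treated in the same way.

The codes `S F^(a₁) S ⋯ S F^(aₖ) S` come from a sequence of `k`-tuples `t_3, t_4, …` with entries of
`t_i` at most `i` such that no term is bounded by a later one. Concatenating such sequences of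
`(k-1)`-tuples, with a decreasing additional entry, yields one of length at least `A(k, 3) - 3`.
For `k = 7200` this suffices, as `A(7200, 3) = A(7198, A(7198, 4))` and `A(7198, 4) ≥ 2^7200`.
-/

namespace FriedmanWord

open List

/-! ### Subwords and blocks -/

section Sublist

variable {α : Type*} {a b m s : α} {k x x' g h : ℕ} {A B R V X Y : List α}

theorem cons_sublist_of_sublist_replicate_append (hab : a ≠ b)
    (h : a :: Y <+ replicate k b ++ B) : a :: Y <+ B := by
  induction k with
  | zero => simpa only [replicate_zero, nil_append] using h
  | succ k ih =>
    rw [replicate_succ, cons_append] at h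
    obtain h | ⟨r, hr, -⟩ := sublist_cons_iff.1 h
    · exact ih h
    · exact absurd (cons.inj hr).1 hab

theorem sublist_or_sublist_of_append_cons_sublist (hab : a ≠ b)
    (h : X ++ a :: Y <+ A ++ (replicate k b ++ B)) : X ++ [a] <+ A ∨ Y <+ B := by
  obtain ⟨U, V, hUV, hU, hV⟩ := sublist_append_iff.1 h
  have of_tail (hV' : a :: Y <+ V) : Y <+ B :=
    sublist_of_cons_sublist (cons_sublist_of_sublist_replicate_append hab (hV'.trans hV))
  obtain ⟨W, rfl, hW⟩ | ⟨W, rfl, rfl⟩ := append_eq_append_iff.1 hUV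
  · obtain ⟨-, rfl⟩ | ⟨W', rfl, -⟩ := cons_eq_append_iff.1 hW
    · exact .inr (of_tail (Sublist.refl _))
    · refine .inl (Sublist.trans ?_ hU)
      simp only [append_sublist_append_left, singleton_sublist, mem_cons, true_or]
  · exact .inr (of_tail (sublist_append_right _ _))

theorem cons_sublist_replicate_append (hk : 0 < k) : a :: Y <+ replicate k a ++ Y :=
  (singleton_sublist.2 (mem_replicate.2 ⟨hk.ne', rfl⟩)).append_right Y

theorem replicate_sub_append_sublist (hx : x' ≤ x)
    (h : replicate x s ++ Y <+ replicate x' s ++ A) : replicate (x - x') s ++ Y <+ A := by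
  rw [← Nat.add_sub_of_le hx, ← replicate_append_replicate, append_assoc,
    append_sublist_append_left] at h
  exact h

theorem sublist_of_replicate_append_cons_sublist (hms : m ≠ s)
    (H : replicate g m ++ s :: R <+ replicate h m ++ s :: V) : R <+ V :=
  cons_sublist_cons.1 <| cons_sublist_of_sublist_replicate_append hms.symm <|
    (sublist_append_right _ _).trans H

theorem replicate_append_sublist_of_lt (hms : m ≠ s) (hgh : h < g)
    (H : replicate g m ++ R <+ replicate h m ++ s :: V) :
    replicate g m ++ R <+ replicate h m ++ V := by
  have H' := replicate_sub_append_sublist hgh.le H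
  rw [← Nat.sub_add_cancel (Nat.sub_pos_of_lt hgh), replicate_succ, cons_append] at H'
  obtain H' | ⟨r, hr, -⟩ := sublist_cons_iff.1 H'
  · rw [← cons_append, ← replicate_succ, Nat.sub_add_cancel (Nat.sub_pos_of_lt hgh)] at H'
    calc replicate g m ++ R = replicate h m ++ (replicate (g - h) m ++ R) := by
          rw [← append_assoc, replicate_append_replicate, Nat.add_sub_of_le hgh.le]
      _ <+ replicate h m ++ V := H'.append_left _
  · exact absurd (cons.inj hr).1 hms

end Sublist

section Block

theorem friedmanBlock_eq {α : Type} {A B C : List α} {i : ℕ} (hA : A.length + 1 = i)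
    (hB : B.length = i + 1) : friedmanBlock (A ++ (B ++ C)) i = B := by
  subst hA
  rw [friedmanBlock, Nat.add_sub_cancel, drop_left, take_left' hB]

theorem friedmanBlock_append_left {α : Type} {A : List α} (B : List α) {i : ℕ}
    (h1 : 1 ≤ i) (hi : 2 * i ≤ A.length) : friedmanBlock (A ++ B) i = friedmanBlock A i := by
  rw [friedmanBlock, friedmanBlock, drop_append_of_le_length (by omega),
    take_append_of_le_length (by rw [length_drop]; omega)]

end Block

/-! ### The head -/

/-- The marker letter, which occurs only in the head of the word. -/
abbrev M : Fin 3 := 0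

/-- The filler letter: a code embeds in another one by skipping copies of `F`. -/
abbrev F : Fin 3 := 1

/-- The separator letter. -/
abbrev S : Fin 3 := 2

section MarkWord

variable {ps qs : List ℕ} {a b c e e' g H i j k p q w : ℕ}

/-- The letters at positions `a ≤ x < b` of the word that has `S` at the positions in `ps` and
`M` elsewhere. -/
def markWord (ps : List ℕ) (a b : ℕ) : List (Fin 3) :=
  (Ico a b).map fun x => if x ∈ ps then S else M

/-- The list `ps` is an increasing list of positions in `[a, b)`. -/
def IsMarkList (ps : List ℕ) (a b : ℕ) : Prop :=
  ps.Pairwise (· < ·) ∧ ∀ x ∈ ps, a ≤ x ∧ x < b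

theorem length_markWord : (markWord ps a b).length = b - a := by
  rw [markWord, length_map, Ico.length]

theorem notMem_F_markWord : F ∉ markWord ps a b := by
  simp only [markWord, mem_map, not_exists, not_and]
  intro x _
  split <;> decide

theorem markWord_append (hab : a ≤ b) (hbc : b ≤ c) :
    markWord ps a b ++ markWord ps b c = markWord ps a c := by
  rw [markWord, markWord, markWord, ← map_append, Ico.append_consecutive hab hbc]

theorem markWord_congr (h : ∀ x, a ≤ x → x < b → (x ∈ ps ↔ x ∈ qs)) :
    markWord ps a b = markWord qs a b := by
  refine map_congr_left fun x hx => ?_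
  rw [Ico.mem] at hx
  simp only [h x hx.1 hx.2]

theorem markWord_eq_replicate (h : ∀ x ∈ ps, x < a ∨ b ≤ x) :
    markWord ps a b = replicate (b - a) M := by
  rw [markWord_congr (qs := []) (fun x hx hx' => iff_of_false (fun hm => by grind) not_mem_nil)]
  simp only [markWord, not_mem_nil, if_false, map_const', Ico.length]

theorem IsMarkList.of_cons (h : IsMarkList (q :: ps) a b) : IsMarkList ps (q + 1) b :=
  ⟨h.1.of_cons, fun x hx => ⟨rel_of_pairwise_cons h.1 hx, (h.2 x (mem_cons_of_mem _ hx)).2⟩⟩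

theorem IsMarkList.head_mem (h : IsMarkList (q :: ps) a b) : a ≤ q ∧ q < b :=
  h.2 q mem_cons_self

theorem markWord_cons (h : IsMarkList (q :: ps) a b) :
    markWord (q :: ps) a b = replicate (q - a) M ++ S :: markWord ps (q + 1) b := by
  obtain ⟨ha, hb⟩ := h.head_mem
  have hq : markWord (q :: ps) q (q + 1) = [S] := by
    simp only [markWord, Ico.succ_singleton, map_cons, map_nil, mem_cons, true_or, if_true]
  have hlt {x : ℕ} (hx : x ∈ ps) : q < x := rel_of_pairwise_cons h.1 hx
  rw [← markWord_append ha hb.le, ← markWord_append q.le_succ hb, hq,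
    markWord_eq_replicate (fun x hx => .inr (by grind)),
    markWord_congr (qs := ps) (fun x hx _ => by grind)]
  rfl

theorem IsMarkList.count_S (h : IsMarkList ps a b) : (markWord ps a b).count S = ps.length := by
  induction ps generalizing a with
  | nil => rw [markWord_eq_replicate (by simp), count_replicate]; rfl
  | cons q ps ih =>
    rw [markWord_cons h, count_append, count_replicate, if_neg (by decide), count_cons_self,
      ih h.of_cons, zero_add, length_cons]

theorem IsMarkList.count_M_add (h : IsMarkList ps a b) :
    (markWord ps a b).count M + ps.length = b - a := by
  induction ps generalizing a with
  | nil => rw [markWord_eq_replicate (by simp), count_replicate_self, length_nil, add_zero]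
  | cons q ps ih =>
    have := h.head_mem
    have := ih h.of_cons
    rw [markWord_cons h, count_append, count_replicate_self, count_cons_of_ne (by decide),
      length_cons]
    omega

/-- Greedy refutation of an embedding of the mark word of `ps` on `[a, e)` into
`M ^ c ++ markWord qs (b + c) e'`, for unknown `c` and unknown `e, e'` with `e' ≤ e + H`: every
mark is matched to the first mark of the target preceded by enough letters `M`, and in the end too
few letters `M` are left. A skipped mark of the target is accounted for by increasing `b`. -/
def greedyRefutes (H : ℕ) : List ℕ → List ℕ → ℕ → ℕ → Bool
  | [], qs, a, b => decide (H + a < b + qs.length)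
  | _ :: _, [], _, _ => true
  | p :: ps, q :: qs, a, b =>
    if p + b ≤ q + a then greedyRefutes H ps qs (p + 1) (q + 1)
    else greedyRefutes H (p :: ps) qs a (b + 1)
termination_by structural _ qs => qs

theorem not_markWord_sublist_of_length_lt (hps : IsMarkList ps a e) (hqs : IsMarkList qs (b + c) e')
    (h : qs.length < ps.length) : ¬ markWord ps a e <+ replicate c M ++ markWord qs (b + c) e' := by
  intro hs
  have := hs.count_le S
  rw [count_append, hps.count_S, hqs.count_S, count_replicate, if_neg (by decide)] at this
  omega

theorem not_markWord_nil_sublist_of_add_lt (hH : H + a < b + qs.length) (hps : IsMarkList [] a e)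
    (hqs : IsMarkList qs (b + c) e') (hle : b + c ≤ e') (he : e' ≤ e + H) :
    ¬ markWord [] a e <+ replicate c M ++ markWord qs (b + c) e' := by
  intro hs
  have hcount := hs.count_le M
  have hM := hps.count_M_add
  have hM' := hqs.count_M_add
  rw [count_append, count_replicate_self] at hcount
  rw [length_nil] at hM
  omega

theorem not_markWord_sublist_of_greedyRefutes (h : greedyRefutes H ps qs a b)
    (hps : IsMarkList ps a e) (hqs : IsMarkList qs (b + c) e') (hle : b + c ≤ e')
    (he : e' ≤ e + H) : ¬ markWord ps a e <+ replicate c M ++ markWord qs (b + c) e' := by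
  induction qs generalizing ps a b c with
  | nil =>
    cases ps with
    | nil => exact not_markWord_nil_sublist_of_add_lt (of_decide_eq_true h) hps hqs hle he
    | cons p ps => exact not_markWord_sublist_of_length_lt hps hqs (by simp)
  | cons q qs ih =>
    cases ps with
    | nil => exact not_markWord_nil_sublist_of_add_lt (of_decide_eq_true h) hps hqs hle he
    | cons p ps =>
      intro hs
      have hp := hps.head_mem
      have hq := hqs.head_mem
      rw [markWord_cons hqs, ← append_assoc, replicate_append_replicate] at hs
      rw [greedyRefutes] at h
      split at h
      case isTrue hpq =>
        rw [markWord_cons hps] at hs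
        exact ih (c := 0) h hps.of_cons hqs.of_cons hq.2
          (sublist_of_replicate_append_cons_sublist (by decide) hs)
      case isFalse hpq =>
        obtain ⟨r, hr⟩ : ∃ r, q + 1 = b + 1 + r := ⟨q - b, by omega⟩
        refine ih (c := r) h hps (hr ▸ hqs.of_cons) (by omega) ?_
        rw [markWord_cons hps] at hs ⊢
        rw [← hr, show r = c + (q - (b + c)) by omega]
        exact replicate_append_sublist_of_lt (by decide) (by omega) hs

/-- Refutation of all embeddings of the mark word of `p :: ps` on `[i, 2 * i]` into the mark word
of `qs` on `[j, 2 * j]` with `1 ≤ j - i` and `g ≤ j - i ≤ w`. The number of skipped marks of the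
target is `k`. The mark `p` fits the mark `q` only if `j - i ≤ q - p - k`, and the remaining marks
are then refuted greedily. -/
def blockRefutes (g w p : ℕ) (ps : List ℕ) : List ℕ → ℕ → Bool
  | [], _ => true
  | q :: qs, k =>
    decide (qs.length < ps.length) ||
      (decide (q < p + k + max 1 g) ||
          greedyRefutes (2 * min (q - p - k) w) ps qs (p + 1) (q + 1)) &&
        blockRefutes g w p ps qs (k + 1)

theorem not_markWord_sublist_of_blockRefutes (h : blockRefutes g w p ps qs k) (hij : i < j)
    (hg : g ≤ j - i) (hw : j - i ≤ w) (hps : IsMarkList (p :: ps) i (2 * i + 1))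
    (hqs : IsMarkList qs (j + k + c) (2 * j + 1)) :
    ¬ markWord (p :: ps) i (2 * i + 1) <+
      replicate c M ++ markWord qs (j + k + c) (2 * j + 1) := by
  induction qs generalizing k c with
  | nil => exact not_markWord_sublist_of_length_lt hps hqs (by simp)
  | cons q qs ih =>
    obtain hlt | hlt := lt_or_ge qs.length ps.length
    · exact not_markWord_sublist_of_length_lt hps hqs (Nat.succ_lt_succ hlt)
    intro hs
    obtain ⟨hp, -⟩ := hps.head_mem
    obtain ⟨hq, hq'⟩ := hqs.head_mem
    simp only [blockRefutes, Bool.and_eq_true, Bool.or_eq_true, decide_eq_true_eq,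
      hlt.not_gt, false_or] at h
    rw [markWord_cons hps, markWord_cons hqs, ← append_assoc, replicate_append_replicate] at hs
    by_cases hpq : p - i ≤ c + (q - (j + k + c))
    · have hgreedy := h.1.resolve_left (by omega)
      exact not_markWord_sublist_of_greedyRefutes (c := 0) hgreedy hps.of_cons hqs.of_cons hq'
        (by omega) (sublist_of_replicate_append_cons_sublist (by decide) hs)
    · obtain ⟨r, hr⟩ : ∃ r, q + 1 = j + (k + 1) + r := ⟨q - j - k, by omega⟩
      refine ih (k := k + 1) (c := r) h.2 (hr ▸ hqs.of_cons) ?_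
      rw [markWord_cons hps, ← hr, show r = c + (q - (j + k + c)) by omega]
      exact replicate_append_sublist_of_lt (by decide) (by omega) hs

end MarkWord


section Head

/-- The positions of `S` in the head. From `50` on they form runs, each starting at twice the start
of the preceding run plus `2` and being shorter by one. -/
def headMarks : List ℕ :=
  [5, 8] ++ Ico 10 14 ++ Ico 15 18 ++ Ico 19 36 ++
    (range 11).flatMap fun k => Ico (52 * 2 ^ k - 2) (52 * 2 ^ k + 9 - k)

/-- The intervals `[a, e₁], [e₁ + 1, e₂], …` for a list `e₁, e₂, …` of endpoints. -/
def phasesFrom : ℕ → List ℕ → List (ℕ × ℕ)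
  | _, [] => []
  | a, e :: es => (a, e) :: phasesFrom (e + 1) es

/-- Intervals of indices `i` such that the marks in the block `[i, 2 * i]` do not depend on `i`. -/
def phases : List (ℕ × ℕ) :=
  phasesFrom 4 (Ico 4 15 ++ headMarks.filter (15 ≤ ·))

/-- The marks lying in the block `[i, 2 * i]` for each index `i` of the phase `P`. -/
def phaseMarks (P : ℕ × ℕ) : List ℕ :=
  headMarks.filter fun x => P.2 ≤ x ∧ x ≤ 2 * P.1

/-- Refutation of all embeddings of a block of the phase `P` into a later block of the phase `Q`. -/
def phaseRefutes (P Q : ℕ × ℕ) : Bool :=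
  match phaseMarks P with
  | [] => false
  | p :: ps => blockRefutes (Q.1 - P.2) (Q.2 - P.1) p ps (phaseMarks Q) 0

theorem phaseMarks_stable : ∀ P ∈ phases, ∀ x ∈ headMarks,
    (x < P.1 ∨ P.2 ≤ x) ∧ (x ≤ 2 * P.1 ∨ 2 * P.2 < x) := by
  decide +kernel

theorem exists_mem_phaseMarks :
    ∀ P ∈ phases, ∃ x ∈ phaseMarks P, x < 2 * P.1 ∧ x + 1 ∉ headMarks := by
  decide +kernel

theorem pairwise_headMarks : headMarks.Pairwise (· < ·) := by decide +kernel

theorem headMarks_le : ∀ x ∈ headMarks, x ≤ 53246 := by decide +kernel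

theorem phaseRefutes_phases :
    ∀ P ∈ phases, ∀ Q ∈ phases, P.1 < Q.2 → phaseRefutes P Q := by
  decide +kernel

theorem exists_mem_phasesFrom {a e i : ℕ} {es : List ℕ} (he : e ∈ es) (ha : a ≤ i) (hi : i ≤ e) :
    ∃ P ∈ phasesFrom a es, P.1 ≤ i ∧ i ≤ P.2 := by
  induction es generalizing a with
  | nil => exact absurd he not_mem_nil
  | cons e' es ih =>
    by_cases hie : i ≤ e'
    · exact ⟨(a, e'), mem_cons_self, ha, hie⟩
    · obtain ⟨P, hP, hiP⟩ := ih (a := e' + 1) ((mem_cons.1 he).resolve_left (by omega)) (by omega)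
      exact ⟨P, mem_cons_of_mem _ hP, hiP⟩

theorem exists_mem_phases {i : ℕ} (h4 : 4 ≤ i) (hi : i ≤ 53246) :
    ∃ P ∈ phases, P.1 ≤ i ∧ i ≤ P.2 :=
  exists_mem_phasesFrom (by decide +kernel) h4 hi

theorem mem_phaseMarks {P : ℕ × ℕ} {x : ℕ} :
    x ∈ phaseMarks P ↔ x ∈ headMarks ∧ P.2 ≤ x ∧ x ≤ 2 * P.1 := by
  simp only [phaseMarks, mem_filter, decide_eq_true_eq]

theorem isMarkList_phaseMarks {P : ℕ × ℕ} {i : ℕ} (h1 : P.1 ≤ i) (h2 : i ≤ P.2) :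
    IsMarkList (phaseMarks P) i (2 * i + 1) :=
  ⟨pairwise_headMarks.filter _, fun x hx => by have := mem_phaseMarks.1 hx; omega⟩

theorem markWord_headMarks {P : ℕ × ℕ} {i : ℕ} (hP : P ∈ phases) (h1 : P.1 ≤ i) (h2 : i ≤ P.2) :
    markWord headMarks i (2 * i + 1) = markWord (phaseMarks P) i (2 * i + 1) := by
  refine markWord_congr fun x hx hx' => ?_
  rw [mem_phaseMarks]
  refine ⟨fun hm => ⟨hm, ?_⟩, And.left⟩
  have := phaseMarks_stable P hP x hm
  omega

theorem not_markWord_sublist_markWord {i j : ℕ} (hi : 4 ≤ i) (hij : i < j) (hj : j ≤ 53246) :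
    ¬ markWord headMarks i (2 * i + 1) <+ markWord headMarks j (2 * j + 1) := by
  obtain ⟨P, hP, hP1, hP2⟩ := exists_mem_phases hi (by omega)
  obtain ⟨Q, hQ, hQ1, hQ2⟩ := exists_mem_phases (by omega) hj
  have href := phaseRefutes_phases P hP Q hQ (by omega)
  have hPmarks := isMarkList_phaseMarks hP1 hP2
  rw [markWord_headMarks hP hP1 hP2, markWord_headMarks hQ hQ1 hQ2]
  rw [phaseRefutes] at href
  cases hps : phaseMarks P with
  | nil => rw [hps] at href; contradiction
  | cons p ps =>
    rw [hps] at href hPmarks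
    exact not_markWord_sublist_of_blockRefutes (c := 0) href hij (by omega) (by omega) hPmarks
      (isMarkList_phaseMarks hQ1 hQ2)

theorem S_M_sublist_markWord {i : ℕ} (h4 : 4 ≤ i) (hi : i ≤ 53246) :
    [S, M] <+ markWord headMarks i (2 * i + 1) := by
  obtain ⟨P, hP, hP1, hP2⟩ := exists_mem_phases h4 hi
  obtain ⟨x, hx, hlt, hnot⟩ := exists_mem_phaseMarks P hP
  obtain ⟨hmem, hle, -⟩ := mem_phaseMarks.1 hx
  calc [S, M] = markWord headMarks x (x + 2) := by
        simp [markWord, Ico.eq_cons, hmem, hnot]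
    _ <+ markWord headMarks i (2 * i + 1) := by
        rw [← markWord_append (show i ≤ x by omega) (show x ≤ 2 * i + 1 by omega),
          ← markWord_append (show x ≤ x + 2 by omega) (show x + 2 ≤ 2 * i + 1 by omega)]
        exact (sublist_append_left _ _).trans (sublist_append_right _ _)

theorem not_S_M_sublist_replicate_append (x y : ℕ) :
    ¬ [S, M] <+ replicate x M ++ replicate y S := by
  intro h
  have h' := cons_sublist_of_sublist_replicate_append (by decide) h
  exact absurd (eq_of_mem_replicate (h'.subset (mem_cons_of_mem _ mem_cons_self))) (by decide)

/-- The beginning of the word: the letters with index `i ≥ 4` are given by `headMarks`. -/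
def head : List (Fin 3) := [M, F, F] ++ markWord headMarks 4 106494

theorem length_head : head.length = 106493 := by
  rw [head, length_append, length_markWord]; rfl

theorem head_append_eq {i j : ℕ} (T : List (Fin 3)) (hi : 4 ≤ i) (hij : i ≤ j)
    (hj : j ≤ 106494) :
    head ++ T = ([M, F, F] ++ markWord headMarks 4 i) ++
      (markWord headMarks i j ++ (markWord headMarks j 106494 ++ T)) := by
  rw [← append_assoc (markWord headMarks i j), markWord_append hij hj, append_assoc,
    ← append_assoc (markWord headMarks 4 i), markWord_append hi (hij.trans hj), head, append_assoc]

theorem length_append_markWord_add_one {i : ℕ} (hi : 4 ≤ i) :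
    ([M, F, F] ++ markWord headMarks 4 i).length + 1 = i := by
  rw [length_append, length_markWord]
  simp only [length_cons, length_nil]
  omega

theorem friedmanBlock_head {i : ℕ} (T : List (Fin 3)) (hi : 4 ≤ i) (hi' : i ≤ 53246) :
    friedmanBlock (head ++ T) i = markWord headMarks i (2 * i + 1) := by
  rw [head_append_eq T hi (show i ≤ 2 * i + 1 by omega) (by omega)]
  refine friedmanBlock_eq (length_append_markWord_add_one hi) ?_
  rw [length_markWord]
  omega

theorem friedmanBlock_head_append_replicate {i : ℕ} (hi : 53246 < i) (hi' : i ≤ 106493) :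
    friedmanBlock (head ++ replicate 106493 S) i =
      replicate (106494 - i) M ++ replicate (2 * i - 106493) S := by
  have hmarks : markWord headMarks i 106494 = replicate (106494 - i) M :=
    markWord_eq_replicate fun x hx => .inl ((headMarks_le x hx).trans_lt hi)
  rw [head_append_eq _ (show 4 ≤ i by omega) (show i ≤ 106494 by omega) le_rfl, hmarks,
    show markWord headMarks 106494 106494 = [] from rfl, nil_append,
    show replicate 106493 S = replicate (2 * i - 106493) S ++ replicate (2 * (106493 - i)) S by
      rw [replicate_append_replicate]; congr 1; omega,
    ← append_assoc (replicate _ M)]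
  refine friedmanBlock_eq (length_append_markWord_add_one (by omega)) ?_
  rw [length_append, length_replicate, length_replicate]
  omega

theorem friedmanBlock_head_initial (T : List (Fin 3)) :
    friedmanBlock (head ++ T) 1 = [M, F] ∧ friedmanBlock (head ++ T) 2 = [F, F, M] ∧
      friedmanBlock (head ++ T) 3 = [F, M, S, M] := by
  rw [head, ← markWord_append (show 4 ≤ 7 by decide) (show 7 ≤ 106494 by decide)]
  exact ⟨rfl, rfl, rfl⟩

/-- A word `h` can be continued by `S ^ h.length` and a suitable tail without the letter `M`. -/
structure IsHead (h : List (Fin 3)) : Prop where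
  satisfiesStar : SatisfiesStar (h ++ replicate h.length S)
  M_mem_block : ∀ i, 1 ≤ i → i ≤ h.length → M ∈ friedmanBlock (h ++ replicate h.length S) i

theorem M_mem_friedmanBlock_head {i : ℕ} (hi : 4 ≤ i) (hi' : i ≤ 106493) :
    M ∈ friedmanBlock (head ++ replicate 106493 S) i := by
  obtain h | h := le_or_gt i 53246
  · rw [friedmanBlock_head _ hi h]
    exact (S_M_sublist_markWord hi h).subset (by simp only [mem_cons, true_or, or_true])
  · rw [friedmanBlock_head_append_replicate h hi']
    exact mem_append_left _ (mem_replicate.2 ⟨by omega, rfl⟩)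

theorem F_notMem_friedmanBlock_head {i : ℕ} (hi : 4 ≤ i) (hi' : i ≤ 106493) :
    F ∉ friedmanBlock (head ++ replicate 106493 S) i := by
  obtain h | h := le_or_gt i 53246
  · rw [friedmanBlock_head _ hi h]
    exact notMem_F_markWord
  · rw [friedmanBlock_head_append_replicate h hi', mem_append, mem_replicate, mem_replicate]
    rintro (⟨-, h⟩ | ⟨-, h⟩) <;> exact absurd h (by decide)

theorem not_friedmanBlock_head_sublist {i j : ℕ} (hi : 4 ≤ i) (hij : i < j) (hj : j ≤ 106493) :
    ¬ friedmanBlock (head ++ replicate 106493 S) i <+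
      friedmanBlock (head ++ replicate 106493 S) j := by
  intro hs
  obtain hj' | hj' := le_or_gt j 53246
  · rw [friedmanBlock_head _ hi (by omega), friedmanBlock_head _ (by omega) hj'] at hs
    exact not_markWord_sublist_markWord hi hij hj' hs
  rw [friedmanBlock_head_append_replicate hj' hj] at hs
  obtain hi' | hi' := le_or_gt i 53246
  · rw [friedmanBlock_head _ hi hi'] at hs
    exact not_S_M_sublist_replicate_append _ _ ((S_M_sublist_markWord hi hi').trans hs)
  · rw [friedmanBlock_head_append_replicate hi' (by omega)] at hs
    have hcount := hs.count_le M
    simp only [count_append, count_replicate_self, count_replicate,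
      if_neg (show ¬ (S == M) = true by decide)] at hcount
    omega

theorem isHead_head : IsHead head := by
  have ⟨h1, h2, h3⟩ := friedmanBlock_head_initial (replicate 106493 S)
  constructor <;> rw [length_head]
  · intro i j hi hij hj hs
    rw [length_append, length_head, length_replicate] at hj
    obtain hi4 | hi4 := le_or_gt 4 i
    · exact not_friedmanBlock_head_sublist hi4 hij (by omega) hs
    obtain hj4 | hj4 := le_or_gt 4 j
    · refine F_notMem_friedmanBlock_head hj4 (by omega) (hs.subset ?_)
      interval_cases i <;> simp only [h1, h2, h3, mem_cons, true_or, or_true]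
    · interval_cases j <;> interval_cases i <;> simp only [h1, h2, h3] at hs <;>
        exact absurd hs (by decide)
  · intro i hi hi'
    obtain hi4 | hi4 := le_or_gt 4 i
    · exact M_mem_friedmanBlock_head hi4 hi'
    · interval_cases i <;> simp only [h1, h2, h3, mem_cons, true_or, or_true]

end Head

/-! ### Bad sequences and their codes -/

section Ackermann

variable {f k a c e e' : ℕ}

theorem ackF_succ_succ (f c : ℕ) : ackF (f + 2) (c + 2) = ackF (f + 1) (ackF (f + 2) (c + 1)) := by
  rw [ackF]

theorem two_mul_le_ackF (f c : ℕ) : 2 * c ≤ ackF (f + 1) c := by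
  induction f generalizing c with
  | zero => rw [ackF]
  | succ f ihf =>
    induction c with
    | zero => exact Nat.zero_le _
    | succ c ihc =>
      cases c with
      | zero => rw [ackF]
      | succ c =>
        calc 2 * (c + 1 + 1) ≤ 2 * ackF (f + 2) (c + 1) := by
              have : 2 * (c + 1) ≤ ackF (f + 2) (c + 1) := ihc
              omega
          _ ≤ ackF (f + 1) (ackF (f + 2) (c + 1)) := ihf _
          _ = ackF (f + 2) (c + 2) := (ackF_succ_succ f c).symm

theorem monotone_ackF (f : ℕ) : Monotone (ackF (f + 1)) := by
  refine monotone_nat_of_le_succ fun c => ?_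
  cases f with
  | zero => rw [ackF, ackF]; omega
  | succ f =>
    cases c with
    | zero => rw [ackF, ackF]
    | succ c =>
      calc ackF (f + 2) (c + 1) ≤ 2 * ackF (f + 2) (c + 1) := Nat.le_mul_of_pos_left _ two_pos
        _ ≤ ackF (f + 1) (ackF (f + 2) (c + 1)) := two_mul_le_ackF f _
        _ = ackF (f + 2) (c + 2) := (ackF_succ_succ f c).symm

theorem ackF_eq_iterate (f c : ℕ) : ackF (f + 2) (c + 1) = (ackF (f + 1))^[c + 1] 1 := by
  induction c with
  | zero => cases f <;> simp [ackF]
  | succ c ih => rw [Function.iterate_succ_apply', ← ih, ackF]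

theorem ackF_two_right (f : ℕ) : ackF (f + 1) 2 = 4 := by
  induction f with
  | zero => rw [ackF]
  | succ f ih => rw [ackF, ackF, ih]

theorem ackF_three_right (f : ℕ) : ackF (f + 2) 3 = ackF (f + 1) 4 := by
  rw [ackF, ackF_two_right]

theorem two_pow_le_ackF (f : ℕ) : 2 ^ (f + 3) ≤ ackF (f + 1) 4 := by
  induction f with
  | zero => rw [ackF]; decide
  | succ f ih =>
    calc 2 ^ (f + 1 + 3) ≤ 2 * ackF (f + 1) 4 := by rw [add_right_comm, pow_succ]; omega
      _ ≤ ackF (f + 1) (ackF (f + 1) 4) := two_mul_le_ackF f _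
      _ = ackF (f + 2) 4 := by rw [← ackF_three_right, ← ackF_succ_succ]

theorem ackF_le_ackF_three (h : c ≤ 2 ^ (f + 3)) : ackF (f + 1) c ≤ ackF (f + 3) 3 :=
  calc ackF (f + 1) c ≤ ackF (f + 1) (ackF (f + 1) 4) :=
        monotone_ackF f (h.trans (two_pow_le_ackF f))
    _ = ackF (f + 3) 3 := by rw [ackF_three_right, ← ackF_three_right f, ← ackF_succ_succ]

/-- A bad sequence, in the sense of well-quasi-orders, of `k`-tuples with indices in `[c, e)`: no
term is bounded by a later one. The entries are bounded by the index. -/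
structure IsBadSeq (k c e : ℕ) (t : ℕ → Fin k → ℕ) : Prop where
  apply_le : ∀ i, c ≤ i → i < e → ∀ x, t i x ≤ i
  not_le : ∀ i j, c ≤ i → i < j → j < e → ¬ t i ≤ t j

theorem isBadSeq_const_sub (c : ℕ) : IsBadSeq 1 c (2 * c) fun i _ => 2 * c - 1 - i where
  apply_le _ _ _ _ := by omega
  not_le i j _ hij hj h := by
    have : 2 * c - 1 - i ≤ 2 * c - 1 - j := h 0
    omega

theorem IsBadSeq.append {s : ℕ → Fin k → ℕ} {t : ℕ → Fin (k + 1) → ℕ} (hs : IsBadSeq k c e s)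
    (ht : IsBadSeq (k + 1) e e' t) (hac : a ≤ c) (ha : ∀ i, e ≤ i → i < e' → t i 0 < a) :
    IsBadSeq (k + 1) c e' fun i => if i < e then Fin.cons a (s i) else t i where
  apply_le i hci hie x := by
    split
    case isTrue h => exact Fin.cases (hac.trans hci) (hs.apply_le i hci h) x
    case isFalse h => exact ht.apply_le i (not_lt.1 h) hie x
  not_le i j hci hij hje := by
    obtain hj | hj := lt_or_ge j e
    · rw [if_pos (hij.trans hj), if_pos hj, Fin.cons_le_cons]
      exact fun h => hs.not_le i j hci hij hj h.2
    obtain hi | hi := lt_or_ge i e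
    · rw [if_pos hi, if_neg hj.not_gt]
      exact fun h => (ha j hj hje).not_ge (h 0)
    · rw [if_neg hi.not_gt, if_neg hj.not_gt]
      exact ht.not_le i j hi hij hje

theorem exists_isBadSeq_iterate
    (H : ∀ c, 1 ≤ c → ∃ e t, ackF (f + 1) c ≤ e ∧ IsBadSeq (f + 1) c e t) (hac : a ≤ c)
    (hc : 1 ≤ c) : ∃ e t, (ackF (f + 1))^[a] c ≤ e ∧ IsBadSeq (f + 2) c e t ∧
      ∀ i, c ≤ i → i < e → t i 0 < a := by
  induction a generalizing c with
  | zero =>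
    exact ⟨c, fun _ _ => 0, le_rfl, ⟨fun i _ _ _ => i.zero_le, by omega⟩, by omega⟩
  | succ a ih =>
    obtain ⟨e₁, s, he₁, hs⟩ := H c hc
    have hce₁ : c ≤ e₁ := by have := two_mul_le_ackF f c; omega
    obtain ⟨e₂, t, he₂, ht, hta⟩ := ih (by omega) (hc.trans hce₁)
    refine ⟨e₂, _, ?_, hs.append ht (by omega) hta, fun i _ hi => ?_⟩
    · rw [Function.iterate_succ_apply]
      exact ((monotone_ackF f).iterate a he₁).trans he₂
    · split
      case isTrue h => exact a.lt_succ_self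
      case isFalse h => exact (hta i (not_lt.1 h) hi).trans a.lt_succ_self

theorem exists_isBadSeq (f : ℕ) (hc : 1 ≤ c) :
    ∃ e t, ackF (f + 1) c ≤ e ∧ IsBadSeq (f + 1) c e t := by
  induction f generalizing c with
  | zero => exact ⟨2 * c, _, by rw [ackF], isBadSeq_const_sub c⟩
  | succ f ih =>
    obtain ⟨e, t, he, ht, -⟩ := exists_isBadSeq_iterate (fun _ => ih) le_rfl hc
    refine ⟨e, t, le_trans ?_ he, ht⟩
    obtain ⟨c, rfl⟩ := Nat.exists_eq_add_of_le' hc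
    rw [ackF_eq_iterate]
    exact (monotone_ackF f).iterate _ hc

end Ackermann

section Code

variable {v w : List ℕ} {a b j : ℕ}

/-- The code `S F ^ a₁ S F ^ a₂ S ⋯ F ^ aₖ S` of the tuple `(a₁, …, aₖ)`. -/
def code : List ℕ → List (Fin 3)
  | [] => [S]
  | a :: v => S :: (replicate a F ++ code v)

theorem length_code : (code v).length = v.length + 1 + v.sum := by
  induction v with
  | nil => rfl
  | cons a v ih =>
    rw [code, length_cons, length_append, length_replicate, ih, length_cons, sum_cons]
    omega

theorem count_S_code : (code v).count S = v.length + 1 := by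
  induction v with
  | nil => rfl
  | cons a v ih =>
    rw [code, count_cons_self, count_append, count_replicate, if_neg (by decide), ih, length_cons,
      zero_add]

theorem M_notMem_code : M ∉ code v := by
  induction v with
  | nil => decide
  | cons a v ih =>
    rw [code, mem_cons, mem_append, mem_replicate]
    exact not_or.2 ⟨by decide, not_or.2 ⟨fun h => absurd h.2 (by decide), ih⟩⟩

theorem exists_code_eq_cons (v : List ℕ) : ∃ R, code v = S :: R := by
  cases v <;> exact ⟨_, rfl⟩

theorem le_of_replicate_append_code_sublist (hvw : v.length = w.length)
    (h : replicate a F ++ code v <+ replicate b F ++ (code w ++ replicate j F)) : a ≤ b := by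
  by_contra! hba
  obtain ⟨R, hR⟩ := exists_code_eq_cons w
  rw [hR, cons_append] at h
  have hcount := (replicate_append_sublist_of_lt (by decide) hba h).count_le S
  have hw := count_S_code (v := w)
  rw [hR, count_cons_self] at hw
  simp only [count_append, count_replicate, count_S_code, if_neg (show ¬ (F == S) = true by decide)]
    at hcount
  omega

theorem forall₂_le_of_code_sublist (hvw : v.length = w.length)
    (h : code v <+ replicate a F ++ (code w ++ replicate b F)) : Forall₂ (· ≤ ·) v w := by
  induction v generalizing w a with
  | nil =>
    rw [eq_nil_of_length_eq_zero hvw.symm]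
    exact Forall₂.nil
  | cons x v ih =>
    obtain _ | ⟨y, w⟩ := w
    · contradiction
    have hlen : v.length = w.length := Nat.succ.inj hvw
    have htail : replicate x F ++ code v <+ replicate y F ++ (code w ++ replicate b F) := by
      refine sublist_of_replicate_append_cons_sublist (m := F) (s := S) (g := 0) (h := a)
        (by decide) ?_
      rwa [code, code, cons_append, append_assoc] at h
    exact .cons (le_of_replicate_append_code_sublist hlen htail)
      (ih hlen ((sublist_append_right _ _).trans htail))

/-- A sequence of words with `d` letters `S`, of moderate length, such that no word `C j` with
`j < N` embeds in a later one, even when that one is surrounded by letters `F`. -/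
structure IsCodeSeq (d N : ℕ) (C : ℕ → List (Fin 3)) : Prop where
  M_notMem : ∀ j, M ∉ C j
  count_S : ∀ j, (C j).count S = d
  length_le : ∀ j, j < N → (C j).length ≤ d * (j + 4)
  not_sublist : ∀ j l a b, j < l → l < N → ¬ C j <+ replicate a F ++ (C l ++ replicate b F)

theorem IsBadSeq.isCodeSeq {k e : ℕ} {t : ℕ → Fin k → ℕ} (ht : IsBadSeq k 3 e t) :
    IsCodeSeq (k + 1) (e - 3) fun j => code (ofFn (t (j + 3))) where
  M_notMem _ := M_notMem_code
  count_S _ := by rw [count_S_code, length_ofFn]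
  length_le j hj := by
    have hsum : (ofFn (t (j + 3))).sum ≤ k * (j + 3) := by
      rw [sum_ofFn]
      simpa using Finset.sum_le_card_nsmul Finset.univ (t (j + 3)) (j + 3) fun x _ =>
        ht.apply_le (j + 3) (by omega) (by omega) x
    rw [length_code, length_ofFn]
    linarith
  not_sublist j l a b hjl hl h := by
    refine ht.not_le (j + 3) (l + 3) (by omega) (by omega) (by omega) fun x => ?_
    have hforall := forall₂_le_of_code_sublist (by rw [length_ofFn, length_ofFn]) h
    simpa using (forall₂_iff_get.1 hforall).2 x (by simp) (by simp)

theorem exists_isCodeSeq (f : ℕ) : ∃ N C, ackF (f + 1) 3 ≤ N + 3 ∧ IsCodeSeq (f + 2) N C := by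
  obtain ⟨e, t, he, ht⟩ := exists_isBadSeq f (show 1 ≤ 3 by decide)
  exact ⟨e - 3, _, by omega, ht.isCodeSeq⟩

end Code


/-! ### The word -/

section Length

variable {p d j l : ℕ}

/-- Length of the run of `F` at the beginning of round `j`. -/
def leadLength (d j : ℕ) : ℕ := d * (j + 4)

/-- Number of letters of the word up to the end of round `j`. -/
def roundEnd (p d j : ℕ) : ℕ := 2 ^ j * (4 * p - 6 * d - 4)

/-- Number of letters of the word before round `j`. -/
def stemLength (p d : ℕ) : ℕ → ℕ
  | 0 => 2 * p
  | j + 1 => roundEnd p d j + (2 * d + 2)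

/-- Length of round `j`. -/
def roundLength (p d j : ℕ) : ℕ := roundEnd p d j - stemLength p d j

theorem leadLength_zero (d : ℕ) : leadLength d 0 = 4 * d := by
  rw [leadLength, zero_add, mul_comm]

theorem leadLength_succ (d j : ℕ) : leadLength d (j + 1) = leadLength d j + d := by
  rw [leadLength, leadLength]; ring

theorem le_leadLength (d j : ℕ) : 4 * d ≤ leadLength d j := by
  rw [leadLength, mul_comm]; gcongr; exact Nat.le_add_left 4 j

theorem leadLength_pos (hd : 0 < d) (j : ℕ) : 0 < leadLength d j :=
  Nat.mul_pos hd (Nat.succ_pos _)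

theorem le_roundEnd_zero (hp : 9 * d + 4 ≤ p) : 30 * d + 12 ≤ roundEnd p d 0 := by
  rw [roundEnd, pow_zero, one_mul]; omega

theorem roundEnd_succ (p d j : ℕ) : roundEnd p d (j + 1) = 2 * roundEnd p d j := by
  rw [roundEnd, roundEnd, pow_succ]; ring

theorem monotone_roundEnd (p d : ℕ) : Monotone (roundEnd p d) :=
  monotone_nat_of_le_succ fun j => by rw [roundEnd_succ]; omega

theorem two_mul_leadLength_add_lt_roundEnd (hp : 9 * d + 4 ≤ p) (j : ℕ) :
    2 * leadLength d (j + 1) + 2 * d + 2 < roundEnd p d j := by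
  rw [leadLength_succ]
  induction j with
  | zero =>
    have := le_roundEnd_zero hp
    rw [leadLength_zero]
    omega
  | succ j ih =>
    rw [roundEnd_succ, leadLength_succ]
    omega

theorem stemLength_add_roundLength (hp : 9 * d + 4 ≤ p) (j : ℕ) :
    stemLength p d j + roundLength p d j = roundEnd p d j := by
  refine Nat.add_sub_of_le ?_
  cases j with
  | zero => rw [stemLength, roundEnd, pow_zero, one_mul]; omega
  | succ j =>
    have := two_mul_leadLength_add_lt_roundEnd hp j
    rw [stemLength, roundEnd_succ]
    omega

theorem roundLength_succ_add (hp : 9 * d + 4 ≤ p) (j : ℕ) :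
    roundLength p d (j + 1) + (2 * d + 2) = roundEnd p d j := by
  have := stemLength_add_roundLength hp (j + 1)
  rw [stemLength, roundEnd_succ] at this
  omega

theorem stemLength_succ (hp : 9 * d + 4 ≤ p) (j : ℕ) :
    stemLength p d (j + 1) = stemLength p d j + roundLength p d j + (2 * d + 2) := by
  rw [stemLength_add_roundLength hp, stemLength]

theorem roundLength_zero (hp : 9 * d + 4 ≤ p) : roundLength p d 0 + (6 * d + 4) = 2 * p := by
  rw [roundLength, roundEnd, stemLength, pow_zero, one_mul]
  omega

theorem roundLength_add_le_stemLength (hp : 9 * d + 4 ≤ p) (j : ℕ) :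
    roundLength p d j + 4 * d ≤ stemLength p d j := by
  cases j with
  | zero => have := roundLength_zero hp; rw [stemLength]; omega
  | succ j => have := roundLength_succ_add hp j; rw [stemLength]; omega

theorem leadLength_lt_roundLength (hp : 9 * d + 4 ≤ p) (j : ℕ) :
    2 * leadLength d j < roundLength p d j := by
  cases j with
  | zero => have := roundLength_zero hp; rw [leadLength_zero]; omega
  | succ j =>
    have := roundLength_succ_add hp j
    have := two_mul_leadLength_add_lt_roundEnd hp j
    omega

theorem monotone_stemLength (hp : 9 * d + 4 ≤ p) : Monotone (stemLength p d) :=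
  monotone_nat_of_le_succ fun j => by rw [stemLength_succ hp]; omega

theorem roundEnd_lt_stemLength (hp : 9 * d + 4 ≤ p) (h : j < l) :
    roundEnd p d j < stemLength p d l :=
  calc roundEnd p d j < stemLength p d (j + 1) := by rw [stemLength]; omega
    _ ≤ stemLength p d l := monotone_stemLength hp h

theorem exists_stemLength_lt_or {n i : ℕ} (h0 : 2 * p < i) (hn : i ≤ roundEnd p d n) :
    (∃ j ≤ n, stemLength p d j < i ∧ i ≤ roundEnd p d j) ∨
      ∃ j < n, roundEnd p d j < i ∧ i ≤ stemLength p d (j + 1) := by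
  induction n with
  | zero => exact .inl ⟨0, le_rfl, h0, hn⟩
  | succ n ih =>
    obtain hi | hi := le_or_gt i (roundEnd p d n)
    · exact (ih hi).imp (fun ⟨j, hj, H⟩ => ⟨j, hj.trans n.le_succ, H⟩)
        (fun ⟨j, hj, H⟩ => ⟨j, hj.trans n.lt_succ_self, H⟩)
    obtain hi' | hi' := le_or_gt i (stemLength p d (n + 1))
    · exact .inr ⟨n, n.lt_succ_self, hi, hi'⟩
    · exact .inl ⟨n + 1, le_rfl, hi', hn⟩

end Length

section Word

variable {p d N n j : ℕ} {C : ℕ → List (Fin 3)} {h : List (Fin 3)}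

/-- Round `j` of the word: the code `C j` surrounded by letters `F`. -/
def round (p d : ℕ) (C : ℕ → List (Fin 3)) (j : ℕ) : List (Fin 3) :=
  replicate (leadLength d j) F ++
    (C j ++ replicate (roundLength p d j - leadLength d j - (C j).length) F)

/-- The part of the word before round `j`. -/
def stem (h : List (Fin 3)) (d : ℕ) (C : ℕ → List (Fin 3)) : ℕ → List (Fin 3)
  | 0 => h ++ replicate h.length S
  | j + 1 => stem h d C j ++ (round h.length d C j ++ replicate (2 * d + 2) S)

/-- The word with head `h`, a run of `S` of the same length, and the rounds `0, …, n + 1` separated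
by runs of `S`. -/
def word (h : List (Fin 3)) (d : ℕ) (C : ℕ → List (Fin 3)) (n : ℕ) : List (Fin 3) :=
  stem h d C (n + 1) ++ round h.length d C (n + 1)

theorem exists_word_eq (hj : j ≤ n) : ∃ T, word h d C n = stem h d C j ++
    (round h.length d C j ++ (replicate (2 * d + 2) S ++ (round h.length d C (j + 1) ++ T))) := by
  induction n, hj using Nat.le_induction with
  | base => exact ⟨[], by simp only [word, stem, append_assoc, append_nil]⟩
  | succ n _ ih =>
    obtain ⟨T, hT⟩ := ih
    refine ⟨T ++ (replicate (2 * d + 2) S ++ round h.length d C (n + 2)), ?_⟩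
    rw [word] at hT
    rw [word, stem, ← append_assoc (stem h d C (n + 1)), hT]
    simp only [append_assoc]

theorem count_S_round (hC : IsCodeSeq d N C) (p j : ℕ) : (round p d C j).count S = d := by
  simp [round, count_append, count_replicate, hC.count_S, show F ≠ S by decide]

theorem M_notMem_round (hC : IsCodeSeq d N C) (p j : ℕ) : M ∉ round p d C j := by
  simp [round, hC.M_notMem]

theorem leadLength_add_length_lt (hC : IsCodeSeq d N C) (hp : 9 * d + 4 ≤ p) (hj : j < N) :
    leadLength d j + (C j).length < roundLength p d j := by
  have hlen : (C j).length ≤ leadLength d j := hC.length_le j hj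
  have := leadLength_lt_roundLength hp j
  omega

theorem length_round (hC : IsCodeSeq d N C) (hp : 9 * d + 4 ≤ p) (hj : j < N) :
    (round p d C j).length = roundLength p d j := by
  have := leadLength_add_length_lt hC hp hj
  simp only [round, length_append, length_replicate]
  omega

theorem exists_round_eq_append_singleton (hC : IsCodeSeq d N C) (hp : 9 * d + 4 ≤ p)
    (hj : j < N) : ∃ T, round p d C j = replicate (leadLength d j) F ++ (C j ++ (T ++ [F])) := by
  have := leadLength_add_length_lt hC hp hj
  refine ⟨replicate (roundLength p d j - leadLength d j - (C j).length - 1) F, ?_⟩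
  rw [round, ← replicate_succ', Nat.sub_add_cancel (by omega)]

theorem length_stem (hC : IsCodeSeq d N C) (hp : 9 * d + 4 ≤ h.length) (hj : j ≤ N) :
    (stem h d C j).length = stemLength h.length d j := by
  induction j with
  | zero => rw [stem, length_append, length_replicate, stemLength, two_mul]
  | succ j ih =>
    rw [stem, length_append, length_append, length_replicate, ih (by omega),
      length_round hC hp hj, stemLength_succ hp, add_assoc]

theorem length_word (hC : IsCodeSeq d N C) (hp : 9 * d + 4 ≤ h.length) (hn : n + 1 < N) :
    (word h d C n).length = 2 * roundEnd h.length d n := by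
  rw [word, length_append, length_stem hC hp hn.le, length_round hC hp hn,
    stemLength_add_roundLength hp, roundEnd_succ]

theorem exists_stem_eq (hC : IsCodeSeq d N C) (j : ℕ) :
    ∃ T, stem h d C j = (h ++ replicate h.length S) ++ T ∧ M ∉ T := by
  induction j with
  | zero => exact ⟨[], (append_nil _).symm, not_mem_nil⟩
  | succ j ih =>
    obtain ⟨T, hT, hM⟩ := ih
    refine ⟨T ++ (round h.length d C j ++ replicate (2 * d + 2) S), ?_, ?_⟩
    · rw [stem, hT, append_assoc]
    · simp [hM, M_notMem_round hC, show M ≠ S by decide]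

theorem exists_word_eq_head_append (hC : IsCodeSeq d N C) (n : ℕ) :
    ∃ T, word h d C n = (h ++ replicate h.length S) ++ T ∧ M ∉ T := by
  obtain ⟨T, hT, hM⟩ := exists_stem_eq (h := h) hC (n + 1)
  refine ⟨T ++ round h.length d C (n + 1), by rw [word, hT, append_assoc], ?_⟩
  simp [hM, M_notMem_round hC]

end Word

/-! ### Embeddings between blocks -/

section Embedding

variable {c d k r x x' y : ℕ} {A B E P U V Y : List (Fin 3)}

theorem append_singleton_sublist_of_count_lt
    (h : (P ++ [F]) ++ (replicate r S ++ Y) <+ A ++ (replicate k S ++ B)) (hB : B.count S < r) :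
    P ++ [F] <+ A := by
  rw [append_assoc, singleton_append] at h
  refine (sublist_or_sublist_of_append_cons_sublist (by decide) h).resolve_right fun h => ?_
  have := h.count_le S
  rw [count_append, count_replicate_self] at this
  omega

theorem sublist_of_append_replicate_append_cons_sublist
    (h : (P ++ [F]) ++ (replicate r S ++ F :: Y) <+
      (replicate x S ++ A) ++ (replicate k S ++ B)) (hA : A.count S < r) : Y <+ B := by
  rw [← append_assoc] at h
  refine (sublist_or_sublist_of_append_cons_sublist (by decide) h).resolve_left fun h => ?_
  have hF : F :: (replicate r S ++ [F]) <+ P ++ [F] ++ replicate r S ++ [F] := by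
    simp only [append_assoc, cons_append, nil_append, sublist_append_right]
  have := (cons_sublist_of_sublist_replicate_append (by decide) (hF.trans h)).count_le S
  rw [count_cons, count_append, count_replicate_self] at this
  omega

theorem sublist_of_cons_sublist_replicate_append (h : F :: Y <+ replicate k S ++ B) : Y <+ B :=
  sublist_of_cons_sublist (cons_sublist_of_sublist_replicate_append (by decide) h)

/-- The pattern by which an occurrence of the code `E` is located: at least one `F` on each side of
it, and runs of `S` outside. -/
def framed (x : ℕ) (E : List (Fin 3)) (y : ℕ) : List (Fin 3) :=
  replicate x S ++ F :: (E ++ F :: replicate y S)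

theorem framed_eq_append_cons (x : ℕ) (E : List (Fin 3)) (y : ℕ) :
    framed x E y = (replicate x S ++ F :: E) ++ F :: replicate y S := by
  rw [framed, append_assoc, cons_append]

/-- The word `U` contains the code `E`, with `d` letters `S`, framed in such a way that an embedding
of `U` is forced to map `E` into a single round. -/
structure HasFramed (d : ℕ) (E : List (Fin 3)) (x y : ℕ) (U : List (Fin 3)) : Prop where
  framed_sublist : framed x E y <+ U
  one_le : 1 ≤ x
  lt_add : 2 * d < x + y
  one_le_or_lt : 1 ≤ y ∨ 3 * d + 2 < x

theorem HasFramed.mono (hU : HasFramed d E x y U) (h : U <+ V) : HasFramed d E x y V :=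
  ⟨hU.1.trans h, hU.2, hU.3, hU.4⟩

theorem HasFramed.sublist_of_count_le (hU : HasFramed d E x y (A ++ (replicate k S ++ B)))
    (hE : E.count S = d) (hA : A.count S ≤ d) (hB : B.count S ≤ d) : E <+ B := by
  obtain ⟨hsub, hx, hxy, -⟩ := hU
  have hy : y ≤ d := by
    rw [framed_eq_append_cons] at hsub
    obtain h | h := sublist_or_sublist_of_append_cons_sublist (by decide) hsub
    all_goals
      have := h.count_le S
      simp only [count_append, count_cons, count_replicate_self] at this
      omega
  obtain h | h := sublist_or_sublist_of_append_cons_sublist (by decide) hsub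
  · have := h.count_le S
    rw [count_append, count_replicate_self] at this
    omega
  · exact (sublist_append_left _ _).trans h

theorem HasFramed.sublist_left
    (hU : HasFramed d E x y ((replicate x' S ++ A) ++ (replicate k S ++ replicate c F)))
    (hE : S ∈ E) (hA : A.count S ≤ d) (hx' : x' ≤ 2 * d + 2) :
    replicate x S ++ F :: (E ++ [F]) <+ replicate x' S ++ A := by
  have hc : S ∉ replicate c F := fun h => absurd (eq_of_mem_replicate h) (by decide)
  obtain hy | hx := hU.one_le_or_lt
  · have hsub := hU.framed_sublist
    rw [framed_eq_append_cons] at hsub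
    obtain h | h := sublist_or_sublist_of_append_cons_sublist (by decide) hsub
    · rwa [append_assoc, cons_append] at h
    · exact absurd (h.subset (mem_replicate.2 ⟨by omega, rfl⟩)) hc
  · obtain h | h := sublist_or_sublist_of_append_cons_sublist (by decide) hU.framed_sublist
    · have := h.count_le S
      simp only [count_append, count_replicate_self] at this
      omega
    · exact absurd (h.subset (mem_append_left _ hE)) hc

end Embedding

section Window

variable {p d N n i j : ℕ} {C : ℕ → List (Fin 3)} {h : List (Fin 3)}

/-- `P ++ [F]` and `B` are the parts, in round `j` and in round `j + 1`, of a block that contains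
the separator between these rounds. One of these parts contains a code. -/
structure IsCrossing (p d : ℕ) (C : ℕ → List (Fin 3)) (j : ℕ) (P B : List (Fin 3)) : Prop where
  left_sublist : P ++ [F] <+ round p d C j
  right_sublist : B <+ round p d C (j + 1)
  code_sublist : F :: C j <+ P ++ [F] ∨ F :: C (j + 1) <+ B

theorem replicate_append_code_prefix_round (hC : IsCodeSeq d N C) (hp : 9 * d + 4 ≤ p)
    (hj : j < N) : replicate (leadLength d j) F ++ (C j ++ [F]) <+: round p d C j := by
  have := leadLength_add_length_lt hC hp hj
  rw [round, prefix_append_right_inj, prefix_append_right_inj]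
  refine ⟨replicate (roundLength p d j - leadLength d j - (C j).length - 1) F, ?_⟩
  rw [singleton_append, ← replicate_succ, Nat.sub_add_cancel (by omega)]

theorem cons_code_append_sublist_round (hC : IsCodeSeq d N C) (hd : 0 < d) (hp : 9 * d + 4 ≤ p)
    (hj : j < N) : F :: (C j ++ [F]) <+ round p d C j :=
  (cons_sublist_replicate_append (leadLength_pos hd j)).trans
    (replicate_append_code_prefix_round hC hp hj).sublist

theorem friedmanBlock_word_crossing (hC : IsCodeSeq d N C) (hp : 9 * d + 4 ≤ h.length)
    (hn : n + 1 < N) (hj : j ≤ n) {t q : ℕ} (ht : t < roundLength h.length d j)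
    (hq : q + roundLength h.length d j + 2 * d = stemLength h.length d j + 2 * t) :
    friedmanBlock (word h d C n) (stemLength h.length d j + 1 + t) =
      (round h.length d C j).drop t ++
        (replicate (2 * d + 2) S ++ (round h.length d C (j + 1)).take q) := by
  obtain ⟨T, hT⟩ := exists_word_eq (h := h) (d := d) (C := C) hj
  have hend := stemLength_add_roundLength hp j
  have hsucc := roundLength_succ_add hp j
  have hsplit : word h d C n = (stem h d C j ++ (round h.length d C j).take t) ++
      (((round h.length d C j).drop t ++
        (replicate (2 * d + 2) S ++ (round h.length d C (j + 1)).take q)) ++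
        ((round h.length d C (j + 1)).drop q ++ T)) := by
    rw [hT]
    nth_rewrite 1 [← take_append_drop t (round h.length d C j),
      ← take_append_drop q (round h.length d C (j + 1))]
    simp only [append_assoc]
  rw [hsplit]
  refine friedmanBlock_eq ?_ ?_
  · rw [length_append, length_stem hC hp (by omega), length_take_of_le
      (by rw [length_round hC hp (by omega)]; omega)]
    omega
  · rw [length_append, length_append, length_drop, length_replicate, length_take,
      length_round hC hp (by omega), length_round hC hp (by omega)]
    omega

theorem code_sublist_crossing (hC : IsCodeSeq d N C) (hd : 0 < d) (hp : 9 * d + 4 ≤ p)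
    (hj : j + 1 < N) {t q : ℕ}
    (hq : q + roundLength p d j + 2 * d = stemLength p d j + 2 * t) :
    F :: C j <+ (round p d C j).drop t ∨ F :: C (j + 1) <+ (round p d C (j + 1)).take q := by
  obtain ht | ht := lt_or_ge t (leadLength d j)
  · left
    rw [round, drop_append_of_le_length (by rw [length_replicate]; exact ht.le), drop_replicate]
    exact (cons_sublist_replicate_append (Nat.sub_pos_of_lt ht)).trans
      ((sublist_append_left _ _).append_left _)
  · right
    have hlen : (C (j + 1)).length ≤ leadLength d (j + 1) := hC.length_le (j + 1) hj
    have hle := roundLength_add_le_stemLength hp j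
    have hsucc := leadLength_succ d j
    have hprefix : replicate (leadLength d (j + 1)) F ++ C (j + 1) <+:
        (round p d C (j + 1)).take q := by
      refine prefix_take_iff.2 ⟨?_, ?_⟩
      · rw [round, ← append_assoc]
        exact prefix_append _ _
      · rw [length_append, length_replicate]
        omega
    exact (cons_sublist_replicate_append (by omega)).trans hprefix.sublist

theorem exists_drop_round_eq (hC : IsCodeSeq d N C) (hp : 9 * d + 4 ≤ p) (hj : j < N)
    {t : ℕ} (ht : t < roundLength p d j) : ∃ P, (round p d C j).drop t = P ++ [F] := by
  obtain ⟨T, hT⟩ := exists_round_eq_append_singleton hC hp hj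
  have hlen := congrArg length hT
  rw [← append_assoc, ← append_assoc, length_append, length_singleton, length_round hC hp hj]
    at hlen
  exact ⟨(replicate (leadLength d j) F ++ C j ++ T).drop t, by
    rw [hT, ← append_assoc, ← append_assoc, drop_append_of_le_length (by omega)]⟩

theorem exists_isCrossing (hC : IsCodeSeq d N C) (hd : 0 < d) (hp : 9 * d + 4 ≤ h.length)
    (hn : n + 1 < N) (hj : j ≤ n) (hji : stemLength h.length d j < i)
    (hij : i ≤ roundEnd h.length d j) : ∃ P B, IsCrossing h.length d C j P B ∧
      (P ++ [F]).length + i = roundEnd h.length d j + 1 ∧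
      friedmanBlock (word h d C n) i = (P ++ [F]) ++ (replicate (2 * d + 2) S ++ B) := by
  obtain ⟨t, rfl⟩ := Nat.exists_eq_add_of_le (Nat.succ_le_of_lt hji)
  have hend := stemLength_add_roundLength hp j
  have hle := roundLength_add_le_stemLength hp j
  obtain ⟨q, hq⟩ := Nat.exists_eq_add_of_le' (show roundLength h.length d j + 2 * d ≤
    stemLength h.length d j + 2 * t by omega)
  have ht : t < roundLength h.length d j := by omega
  obtain ⟨P, hP⟩ := exists_drop_round_eq hC hp (by omega) ht
  refine ⟨P, (round h.length d C (j + 1)).take q,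
    ⟨hP ▸ drop_sublist _ _, take_sublist _ _, hP ▸ ?_⟩, ?_, hP ▸ ?_⟩
  · exact code_sublist_crossing hC hd hp (by omega) (by omega)
  · rw [← hP, length_drop, length_round hC hp (by omega)]
    omega
  · exact friedmanBlock_word_crossing hC hp hn hj ht (by omega)

end Window

section Run

variable {p d N n i j k x y : ℕ} {C : ℕ → List (Fin 3)} {h U : List (Fin 3)}

theorem hasFramed_of_round_sublist (hC : IsCodeSeq d N C) (hd : 0 < d) (hp : 9 * d + 4 ≤ p)
    (hj : j < N) (hU : replicate x S ++ (round p d C j ++ replicate y S) <+ U) (hx : 1 ≤ x)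
    (hy : 1 ≤ y) (hxy : 2 * d < x + y) : HasFramed d (C j) x y U where
  framed_sublist := by
    have hround := (cons_code_append_sublist_round hC hd hp hj).append_right (replicate y S)
    rw [cons_append, append_assoc] at hround
    exact (hround.append_left _).trans hU
  one_le := hx
  lt_add := hxy
  one_le_or_lt := .inl hy

theorem exists_word_eq_separator (hC : IsCodeSeq d N C) (hp : 9 * d + 4 ≤ h.length)
    (hn : n + 1 < N) (hj : j < n) {t : ℕ} (ht : t ≤ 2 * d + 2) : ∃ A T,
      A.length = roundEnd h.length d j + t ∧ word h d C n = A ++ (replicate (2 * d + 2 - t) S ++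
        (round h.length d C (j + 1) ++
          ((replicate (2 * d + 2) S ++ replicate (leadLength d (j + 2)) F) ++ T))) := by
  obtain ⟨T, hT⟩ := exists_word_eq (h := h) (d := d) (C := C) hj
  refine ⟨stem h d C j ++ (round h.length d C j ++ replicate t S), C (j + 2) ++ (replicate
    (roundLength h.length d (j + 2) - leadLength d (j + 2) - (C (j + 2)).length) F ++ T), ?_, ?_⟩
  · rw [length_append, length_append, length_replicate, length_stem hC hp (by omega),
      length_round hC hp (by omega), ← stemLength_add_roundLength hp, add_assoc]
  · rw [hT, stem, round.eq_1 (j := j + 1 + 1), ← Nat.add_sub_of_le ht, ← replicate_append_replicate,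
      Nat.add_sub_of_le ht]
    simp only [append_assoc]

theorem friedmanBlock_word_separator (hC : IsCodeSeq d N C) (hd : 0 < d)
    (hp : 9 * d + 4 ≤ h.length) (hn : n + 1 < N) (hj : j < n)
    (hji : roundEnd h.length d j < i) (hij : i ≤ stemLength h.length d (j + 1)) : ∃ x y c,
      friedmanBlock (word h d C n) i = (replicate x S ++ round h.length d C (j + 1)) ++
        (replicate y S ++ replicate c F) ∧
      x + i = stemLength h.length d (j + 1) + 1 ∧ 1 ≤ y ∧ y ≤ 2 * d + 2 ∧ 2 * d < x + y := by
  rw [stemLength] at hij ⊢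
  obtain ⟨t, rfl⟩ := Nat.exists_eq_add_of_le (Nat.succ_le_of_lt hji)
  obtain ⟨A, T, hA, hword⟩ := exists_word_eq_separator hC hp hn hj (t := t) (by omega)
  have hlead : 2 * d + 2 ≤ leadLength d (j + 2) := by
    have := le_leadLength d (j + 2)
    omega
  have hsucc := roundLength_succ_add hp j
  have htail : (replicate (2 * d + 2) S ++ replicate (leadLength d (j + 2)) F).take (2 * t + 2) =
      replicate (min (2 * t + 2) (2 * d + 2)) S ++
        replicate (min (2 * t + 2 - (2 * d + 2)) (leadLength d (j + 2))) F := by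
    rw [take_append, take_replicate, take_replicate, length_replicate]
  refine ⟨2 * d + 2 - t, min (2 * t + 2) (2 * d + 2),
    min (2 * t + 2 - (2 * d + 2)) (leadLength d (j + 2)), ?_,
    by omega, by omega, by omega, by omega⟩
  rw [hword, ← htail]
  nth_rewrite 1 [← take_append_drop (2 * t + 2) (replicate (2 * d + 2) S ++ _)]
  rw [append_assoc (take _ _), ← append_assoc (round _ _ _ _), ← append_assoc (replicate _ _),
    ← append_assoc (replicate _ _)]
  refine friedmanBlock_eq (by omega) ?_
  rw [length_append, length_append, length_replicate, length_take, length_append, length_replicate,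
    length_replicate, length_round hC hp (by omega)]
  omega

/-- The part after the initial run of `S` that is visible in blocks starting in this run. -/
def opening (p d : ℕ) (C : ℕ → List (Fin 3)) : List (Fin 3) :=
  round p d C 0 ++ (replicate (2 * d + 2) S ++ replicate (leadLength d 1) F)

theorem length_opening (hC : IsCodeSeq d N C) (hp : 9 * d + 4 ≤ p) (hN : 0 < N) :
    (opening p d C).length + 2 = 2 * p + d := by
  have := roundLength_zero hp
  rw [opening, length_append, length_round hC hp hN, length_append, length_replicate,
    length_replicate, leadLength_succ, leadLength_zero]
  omega

theorem count_S_opening (hC : IsCodeSeq d N C) (p : ℕ) :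
    (opening p d C).count S = 3 * d + 2 := by
  rw [opening, count_append, count_S_round hC, count_append, count_replicate_self, count_replicate,
    if_neg (by decide)]
  omega

theorem friedmanBlock_word_opening (hC : IsCodeSeq d N C) (hd : 2 ≤ d) (hp : 9 * d + 4 ≤ h.length)
    (hN : 0 < N) (hk : 1 ≤ k) (hkp : k ≤ h.length) :
    friedmanBlock (word h d C n) (h.length + k) =
      replicate (h.length + 1 - k) S ++ (opening h.length d C).take (2 * k) := by
  obtain ⟨T, hT⟩ := exists_word_eq (h := h) (d := d) (C := C) n.zero_le
  have hword : ∃ T', word h d C n = (h ++ replicate (k - 1) S) ++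
      ((replicate (h.length + 1 - k) S ++ (opening h.length d C).take (2 * k)) ++ T') := by
    refine ⟨(opening h.length d C).drop (2 * k) ++ (C 1 ++
      (replicate (roundLength h.length d 1 - leadLength d 1 - (C 1).length) F ++ T)), ?_⟩
    rw [append_assoc (replicate _ _), ← append_assoc (take _ _), take_append_drop, append_assoc h,
      ← append_assoc (replicate _ _), replicate_append_replicate,
      show k - 1 + (h.length + 1 - k) = h.length by omega, hT, stem, opening, zero_add,
      round.eq_1 (j := 1)]
    simp only [append_assoc]
  obtain ⟨T', hT'⟩ := hword
  have := length_opening hC hp hN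
  rw [hT']
  refine friedmanBlock_eq ?_ ?_
  · rw [length_append, length_replicate]
    omega
  · rw [length_append, length_replicate, length_take]
    omega

theorem exists_hasFramed_opening (hC : IsCodeSeq d N C) (hd : 0 < d) (hp : 9 * d + 4 ≤ p)
    (hN : 0 < N) (hkp : k ≤ p) (hk : p + 1 ≤ k + (5 * d + 4)) :
    ∃ y, HasFramed d (C 0) (p + 1 - k) y
      (replicate (p + 1 - k) S ++ (opening p d C).take (2 * k)) := by
  have hg := roundLength_zero hp
  obtain hx | hx := le_or_gt (p + 1) (k + (3 * d + 2))
  · refine ⟨min (2 * k - roundLength p d 0) (2 * d + 2), hasFramed_of_round_sublist hC hd hp hN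
      (Sublist.append_left (prefix_take_iff.2 ⟨?_, ?_⟩).sublist _) (by omega) (by omega)
      (by omega)⟩
    · rw [opening, prefix_append_right_inj]
      rw [← take_replicate]
      exact (take_prefix _ _).trans (prefix_append _ _)
    · rw [length_append, length_round hC hp hN, length_replicate]
      omega
  · refine ⟨0, Sublist.append_left ?_ _, by omega, by omega, .inr (by omega)⟩
    have hlen : (C 0).length ≤ leadLength d 0 := hC.length_le 0 hN
    refine (cons_sublist_replicate_append (leadLength_pos hd 0)).trans
      (prefix_take_iff.2 ⟨?_, ?_⟩).sublist
    · exact (replicate_append_code_prefix_round hC hp hN).trans (prefix_append _ _)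
    · rw [length_append, length_append, length_replicate, length_cons, replicate_zero, length_nil]
      rw [leadLength_zero] at hlen ⊢
      omega

end Run

section Comparison

variable {p d N j k k' l x x' y c : ℕ} {C : ℕ → List (Fin 3)} {P P' B B' U V : List (Fin 3)}

theorem IsCodeSeq.not_sublist_round (hC : IsCodeSeq d N C) (p : ℕ) (hjl : j < l) (hl : l < N) :
    ¬ C j <+ round p d C l :=
  hC.not_sublist j l _ _ hjl hl

theorem IsCodeSeq.S_mem (hC : IsCodeSeq d N C) (hd : 0 < d) (j : ℕ) : S ∈ C j :=
  count_pos_iff.1 ((hC.count_S j).symm ▸ hd)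

theorem IsCrossing.count_left_le (hC : IsCodeSeq d N C) (hP : IsCrossing p d C j P B) :
    (P ++ [F]).count S ≤ d :=
  (hP.left_sublist.count_le S).trans (count_S_round hC p j).le

theorem IsCrossing.count_right_le (hC : IsCodeSeq d N C) (hP : IsCrossing p d C j P B) :
    B.count S ≤ d :=
  (hP.right_sublist.count_le S).trans (count_S_round hC p (j + 1)).le

theorem IsCrossing.left_sublist_left (hC : IsCodeSeq d N C) (hV : IsCrossing p d C l P' B')
    (hs : (P ++ [F]) ++ (replicate (2 * d + 2) S ++ B) <+
      (P' ++ [F]) ++ (replicate (2 * d + 2) S ++ B')) : P ++ [F] <+ P' ++ [F] := by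
  have := hV.count_right_le hC
  exact append_singleton_sublist_of_count_lt hs (by omega)

theorem IsCrossing.not_sublist_crossing (hC : IsCodeSeq d N C) (hU : IsCrossing p d C j P B)
    (hV : IsCrossing p d C l P' B') (hjl : j < l) (hl : l + 1 < N) :
    ¬ (P ++ [F]) ++ (replicate (2 * d + 2) S ++ B) <+
      (P' ++ [F]) ++ (replicate (2 * d + 2) S ++ B') := by
  intro hs
  obtain hcode | hcode := hU.code_sublist
  · exact hC.not_sublist_round p hjl (by omega) <| (sublist_of_cons_sublist hcode).trans <|
      (hV.left_sublist_left hC hs).trans hV.left_sublist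
  · have := hV.count_left_le hC
    have hB : C (j + 1) <+ B' := sublist_of_append_replicate_append_cons_sublist (x := 0)
      (A := P' ++ [F]) (((hcode.append_left _).append_left _).trans hs) (by omega)
    exact hC.not_sublist_round p (by omega) hl (hB.trans hV.right_sublist)

theorem IsCrossing.not_sublist_separator (hC : IsCodeSeq d N C) (hd : 0 < d)
    (hU : IsCrossing p d C j P B) (hjl : j < l) (hl : l < N) :
    ¬ (P ++ [F]) ++ (replicate (2 * d + 2) S ++ B) <+
      (replicate x S ++ round p d C l) ++ (replicate y S ++ replicate c F) := by
  intro hs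
  obtain hcode | hcode := hU.code_sublist
  · have hP : P ++ [F] <+ replicate x S ++ round p d C l :=
      append_singleton_sublist_of_count_lt hs (by simp [count_replicate, show F ≠ S by decide])
    exact hC.not_sublist_round p hjl hl (sublist_of_cons_sublist_replicate_append (hcode.trans hP))
  · have hF : C (j + 1) <+ replicate c F := sublist_of_append_replicate_append_cons_sublist
      (((hcode.append_left _).append_left _).trans hs) (by rw [count_S_round hC]; omega)
    exact absurd (eq_of_mem_replicate (hF.subset (hC.S_mem hd _))) (by decide)

theorem HasFramed.not_sublist_crossing (hC : IsCodeSeq d N C) (hU : HasFramed d (C j) x y U)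
    (hV : IsCrossing p d C l P B) (hjl : j ≤ l) (hl : l + 1 < N) :
    ¬ U <+ (P ++ [F]) ++ (replicate (2 * d + 2) S ++ B) := fun hs =>
  hC.not_sublist_round p (Nat.lt_succ_of_le hjl) hl <|
    ((hU.mono hs).sublist_of_count_le (hC.count_S j) (hV.count_left_le hC)
      (hV.count_right_le hC)).trans hV.right_sublist

theorem HasFramed.not_sublist_separator (hC : IsCodeSeq d N C) (hd : 0 < d)
    (hU : HasFramed d (C j) x y U) (hx' : x' ≤ 2 * d + 2) (hjl : j < l ∨ j = l ∧ x' < x)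
    (hl : l < N) :
    ¬ U <+ (replicate x' S ++ round p d C l) ++ (replicate k S ++ replicate c F) := by
  intro hs
  have hleft := (hU.mono hs).sublist_left (hC.S_mem hd j) (count_S_round hC p l).le hx'
  obtain hjl | ⟨rfl, hxx'⟩ := hjl
  · have hcode : C j ++ [F] <+ round p d C l :=
      sublist_of_cons_sublist_replicate_append ((sublist_append_right _ _).trans hleft)
    exact hC.not_sublist_round p hjl hl ((sublist_append_left _ _).trans hcode)
  · have := hleft.count_le S
    simp only [count_append, count_cons, count_replicate_self, count_S_round hC, hC.count_S] at this
    omega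

theorem not_opening_block_sublist (hC : IsCodeSeq d N C) (hd : 3 ≤ d) (hp : 9 * d + 4 ≤ p)
    (hN : 0 < N) (hkk' : k < k') (hk' : k' ≤ p) :
    ¬ replicate (p + 1 - k) S ++ (opening p d C).take (2 * k) <+
      replicate (p + 1 - k') S ++ (opening p d C).take (2 * k') := by
  intro hs
  have hcancel := replicate_sub_append_sublist (by omega) hs
  rw [show p + 1 - k - (p + 1 - k') = k' - k by omega] at hcancel
  have hcount : k' - k ≤ 3 * d + 2 := by
    calc k' - k = (replicate (k' - k) S).count S := count_replicate_self.symm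
      _ ≤ (opening p d C).count S :=
        (((sublist_append_left _ _).trans hcancel).trans (take_sublist _ _)).count_le S
      _ = 3 * d + 2 := count_S_opening hC p
  obtain ⟨Z, hZ⟩ : ∃ Z, opening p d C = replicate (4 * d) F ++ Z :=
    ⟨_, by rw [opening, round, append_assoc, leadLength_zero]⟩
  have hskip : replicate (k' - k) S ++ (opening p d C).take (2 * k) <+ Z.take (2 * k' - 4 * d) := by
    rw [← Nat.sub_add_cancel (Nat.sub_pos_of_lt hkk'), replicate_succ, cons_append] at hcancel ⊢
    refine cons_sublist_of_sublist_replicate_append (b := F) (k := min (2 * k') (4 * d))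
      (by decide) (hcancel.trans ?_)
    rw [hZ, take_append, take_replicate, length_replicate]
  have hlen := hskip.length_le
  have := length_opening hC hp hN
  rw [length_append, length_replicate, length_take, length_take] at hlen
  omega

theorem exists_hasFramed_of_opening_sublist (hC : IsCodeSeq d N C) (hd : 0 < d)
    (hp : 9 * d + 4 ≤ p) (hN : 0 < N) (hkp : k ≤ p)
    (hs : replicate (p + 1 - k) S ++ (opening p d C).take (2 * k) <+ V)
    (hV : V.count S ≤ 5 * d + 4) : ∃ y, HasFramed d (C 0) (p + 1 - k) y
      (replicate (p + 1 - k) S ++ (opening p d C).take (2 * k)) := by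
  have := hs.count_le S
  rw [count_append, count_replicate_self] at this
  exact exists_hasFramed_opening hC hd hp hN hkp (by omega)

end Comparison

section Star

variable {d K N n i i' j x y : ℕ} {C : ℕ → List (Fin 3)} {h P B U : List (Fin 3)}

theorem count_S_friedmanBlock_word_le (hC : IsCodeSeq d N C) (hd : 0 < d)
    (hp : 9 * d + 4 ≤ h.length) (hn : n + 1 < N) (hi : 2 * h.length < i)
    (hin : i ≤ roundEnd h.length d n) : (friedmanBlock (word h d C n) i).count S ≤ 5 * d + 4 := by
  obtain ⟨j, hj, hji, hij⟩ | ⟨j, hj, hji, hij⟩ := exists_stemLength_lt_or hi hin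
  · obtain ⟨P, B, hPB, -, hblock⟩ := exists_isCrossing hC hd hp hn hj hji hij
    have := hPB.count_left_le hC
    have := hPB.count_right_le hC
    rw [hblock, count_append, count_append (l₁ := replicate _ _), count_replicate_self]
    omega
  · obtain ⟨x, y, c, hblock, hx, -, hy, -⟩ := friedmanBlock_word_separator hC hd hp hn hj hji hij
    rw [stemLength] at hx
    rw [hblock, count_append, count_append, count_append, count_S_round hC, count_replicate_self,
      count_replicate_self, count_replicate, if_neg (by decide)]
    omega

theorem HasFramed.not_sublist_friedmanBlock_word (hC : IsCodeSeq d N C) (hd : 0 < d)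
    (hp : 9 * d + 4 ≤ h.length) (hn : n + 1 < N) (hU : HasFramed d (C j) x y U)
    (hx : x + i = stemLength h.length d j + 1) (hji : ∀ l < j, roundEnd h.length d l < i)
    (hii' : i < i') (hi' : 2 * h.length < i') (hin : i' ≤ roundEnd h.length d n) :
    ¬ U <+ friedmanBlock (word h d C n) i' := by
  have le_of_le_roundEnd {l : ℕ} (hl : i' ≤ roundEnd h.length d l) : j ≤ l :=
    le_of_not_gt fun hlj => by have := hji l hlj; omega
  obtain ⟨l, hl, hli, hil⟩ | ⟨l, hl, hli, hil⟩ := exists_stemLength_lt_or hi' hin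
  · obtain ⟨P, B, hPB, -, hblock⟩ := exists_isCrossing hC hd hp hn hl hli hil
    rw [hblock]
    exact hU.not_sublist_crossing hC hPB (le_of_le_roundEnd hil) (by omega)
  · obtain ⟨x', y', c, hblock, hx', -⟩ := friedmanBlock_word_separator hC hd hp hn hl hli hil
    have hsucc := stemLength_add_roundLength hp (l + 1)
    have hjl : j ≤ l + 1 := le_of_le_roundEnd (by omega)
    have hstem : stemLength h.length d (l + 1) = roundEnd h.length d l + (2 * d + 2) := rfl
    rw [hblock]
    refine hU.not_sublist_separator hC hd (by omega) ?_ (by omega)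
    obtain hlt | rfl := hjl.lt_or_eq
    · exact .inl hlt
    · exact .inr ⟨rfl, by omega⟩

theorem IsCrossing.not_sublist_friedmanBlock_word (hC : IsCodeSeq d N C) (hd : 0 < d)
    (hp : 9 * d + 4 ≤ h.length) (hn : n + 1 < N) (hU : IsCrossing h.length d C j P B)
    (hlen : (P ++ [F]).length + i = roundEnd h.length d j + 1)
    (hji : stemLength h.length d j < i) (hii' : i < i') (hi' : 2 * h.length < i')
    (hin : i' ≤ roundEnd h.length d n) :
    ¬ (P ++ [F]) ++ (replicate (2 * d + 2) S ++ B) <+ friedmanBlock (word h d C n) i' := by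
  have lt_of_le_stemLength {l : ℕ} (hl : i' ≤ stemLength h.length d l) : j < l :=
    lt_of_not_ge fun hlj => by have := monotone_stemLength hp hlj; omega
  obtain ⟨l, hl, hli, hil⟩ | ⟨l, hl, hli, hil⟩ := exists_stemLength_lt_or hi' hin
  · obtain ⟨P', B', hPB', hlen', hblock⟩ := exists_isCrossing hC hd hp hn hl hli hil
    have hjl : j ≤ l := Nat.le_of_lt_succ <| lt_of_le_stemLength <|
      hil.trans (roundEnd_lt_stemLength hp l.lt_succ_self).le
    rw [hblock]
    obtain hlt | rfl := hjl.lt_or_eq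
    · exact hU.not_sublist_crossing hC hPB' hlt (by omega)
    · intro hs
      have := (hPB'.left_sublist_left hC hs).length_le
      omega
  · obtain ⟨x', y', c, hblock, -⟩ := friedmanBlock_word_separator hC hd hp hn hl hli hil
    rw [hblock]
    exact hU.not_sublist_separator hC hd (lt_of_le_stemLength hil) (by omega)

theorem not_friedmanBlock_word_sublist_of_two_mul_lt (hC : IsCodeSeq d N C) (hd : 0 < d)
    (hp : 9 * d + 4 ≤ h.length) (hn : n + 1 < N) (hi : 2 * h.length < i) (hii' : i < i')
    (hin : i' ≤ roundEnd h.length d n) :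
    ¬ friedmanBlock (word h d C n) i <+ friedmanBlock (word h d C n) i' := by
  obtain ⟨j, hj, hji, hij⟩ | ⟨j, hj, hji, hij⟩ := exists_stemLength_lt_or hi (hii'.le.trans hin)
  · obtain ⟨P, B, hPB, hlen, hblock⟩ := exists_isCrossing hC hd hp hn hj hji hij
    rw [hblock]
    exact hPB.not_sublist_friedmanBlock_word hC hd hp hn hlen hji hii' (hi.trans hii') hin
  · obtain ⟨x, y, c, hblock, hx, hy, -, hxy⟩ := friedmanBlock_word_separator hC hd hp hn hj hji hij
    have hframed : HasFramed d (C (j + 1)) x y (friedmanBlock (word h d C n) i) := by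
      refine hasFramed_of_round_sublist hC hd hp (by omega) ?_ (by omega) hy hxy
      rw [hblock, append_assoc, append_sublist_append_left, append_sublist_append_left]
      exact sublist_append_left _ _
    exact hframed.not_sublist_friedmanBlock_word hC hd hp hn hx
      (fun l hl => (monotone_roundEnd _ _ (Nat.le_of_lt_succ hl)).trans_lt hji) hii'
      (hi.trans hii') hin

theorem not_friedmanBlock_word_sublist_of_opening (hC : IsCodeSeq d N C) (hd : 3 ≤ d)
    (hp : 9 * d + 4 ≤ h.length) (hn : n + 1 < N) (hi : h.length < i) (hi2 : i ≤ 2 * h.length)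
    (hii' : i < i') (hin : i' ≤ roundEnd h.length d n) :
    ¬ friedmanBlock (word h d C n) i <+ friedmanBlock (word h d C n) i' := by
  obtain ⟨k, rfl⟩ := Nat.exists_eq_add_of_le hi.le
  obtain hi' | hi' := le_or_gt i' (2 * h.length)
  · obtain ⟨k', rfl⟩ := Nat.exists_eq_add_of_le (hi.trans hii').le
    rw [friedmanBlock_word_opening hC (by omega) hp (by omega) (by omega) (by omega),
      friedmanBlock_word_opening hC (by omega) hp (by omega) (by omega) (by omega)]
    exact not_opening_block_sublist hC hd hp (by omega) (by omega) (by omega)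
  · intro hs
    have hS := count_S_friedmanBlock_word_le hC (by omega) hp hn hi' hin
    rw [friedmanBlock_word_opening hC (by omega) hp (by omega) (by omega) (by omega)] at hs
    obtain ⟨y, hframed⟩ :=
      exists_hasFramed_of_opening_sublist hC (by omega) hp (by omega) (by omega) hs hS
    refine hframed.not_sublist_friedmanBlock_word hC (by omega) hp hn ?_ (by omega) hii' hi' hin hs
    rw [stemLength]
    omega

theorem not_friedmanBlock_word_sublist_of_head (hh : IsHead h) (hC : IsCodeSeq d N C)
    (hi : 1 ≤ i) (hih : i ≤ h.length) (hii' : i < i') :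
    ¬ friedmanBlock (word h d C n) i <+ friedmanBlock (word h d C n) i' := by
  obtain ⟨T, hT, hMT⟩ := exists_word_eq_head_append (h := h) hC n
  have hlen : (h ++ replicate h.length S).length = 2 * h.length := by
    rw [length_append, length_replicate, two_mul]
  intro hs
  rw [hT, friedmanBlock_append_left (A := h ++ replicate h.length S) _ hi (by omega)] at hs
  obtain hi' | hi' := le_or_gt i' h.length
  · rw [friedmanBlock_append_left (A := h ++ replicate h.length S) _ (by omega)
      (by omega)] at hs
    exact hh.satisfiesStar i i' hi hii' (by omega) hs
  · have hM := (take_sublist _ _).subset (hs.subset (hh.M_mem_block i hi hih))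
    rw [append_assoc, drop_append, drop_of_length_le (by omega), nil_append] at hM
    obtain hM | hM := mem_append.1 ((drop_sublist _ _).subset hM)
    · exact absurd (eq_of_mem_replicate hM) (by decide)
    · exact hMT hM

theorem satisfiesStar_word (hh : IsHead h) (hC : IsCodeSeq d N C) (hd : 3 ≤ d)
    (hp : 9 * d + 4 ≤ h.length) (hn : n + 1 < N) : SatisfiesStar (word h d C n) := by
  intro i i' hi hii' hi'
  rw [length_word hC hp hn] at hi'
  have hin : i' ≤ roundEnd h.length d n := by omega
  obtain hih | hih := le_or_gt i h.length
  · exact not_friedmanBlock_word_sublist_of_head hh hC hi hih hii'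
  obtain hi2 | hi2 := le_or_gt i (2 * h.length)
  · exact not_friedmanBlock_word_sublist_of_opening hC hd hp hn hih hi2 hii' hin
  · exact not_friedmanBlock_word_sublist_of_two_mul_lt hC (by omega) hp hn hi2 hii' hin

theorem exists_satisfiesStar_ackF_lt (hh : IsHead h) (hK : 2 ≤ K) (hlen : 9 * K + 13 ≤ h.length) :
    ∃ s : List (Fin 3), SatisfiesStar s ∧ ackF K 3 < s.length := by
  obtain ⟨f, rfl⟩ := Nat.exists_eq_add_of_le' (one_le_two.trans hK)
  obtain ⟨N, C, hN, hC⟩ := exists_isCodeSeq f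
  have hack := two_mul_le_ackF f 3
  obtain ⟨n, rfl⟩ := Nat.exists_eq_add_of_le' (show 2 ≤ N by omega)
  have hp : 9 * (f + 2) + 4 ≤ h.length := by omega
  have hlead : n + 5 ≤ leadLength (f + 2) (n + 1) := Nat.le_mul_of_pos_left _ (Nat.succ_pos _)
  have hend := two_mul_leadLength_add_lt_roundEnd hp n
  refine ⟨word h (f + 2) C n, satisfiesStar_word hh hC (by omega) hp (by omega), ?_⟩
  rw [length_word hC hp (by omega)]
  omega

end Star

end FriedmanWord

/-- n(3) > A(7198, 158386): there is a word over a three-letter alphabet of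
length greater than `A(7198, 158386)` satisfying (*). -/
theorem friedman_n3_gt_A7198_158386 :
    ∃ s : List (Fin 3), SatisfiesStar s ∧ ackF 7198 158386 < s.length := by
  have hpow : 158386 ≤ 2 ^ (7197 + 3) :=
    calc 158386 ≤ 2 ^ 18 := by decide
      _ ≤ 2 ^ (7197 + 3) := by gcongr <;> decide
  have hack : ackF 7198 158386 ≤ ackF 7200 3 := FriedmanWord.ackF_le_ackF_three hpow
  obtain ⟨s, hs, hlen⟩ := FriedmanWord.exists_satisfiesStar_ackF_lt FriedmanWord.isHead_head
    (K := 7200) (by decide) (by rw [FriedmanWord.length_head]; decide)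
  exact ⟨s, hs, hack.trans_lt hlen⟩
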